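/- Let (a_k)_{k∈ℤ} ∈ ℓ²(ℤ, ℂ) with energy E = Σ_k |a_k|², and suppose |a_k| ≤ C/⌊k⌋^s for all k, where s > 1/2, C > 0 and ⌊k⌋ = |k| for k ≠ 0, ⌊0⌋ = 1. Then the convolution term N_k = -i(k/2) Σ_{k₁∈ℤ} a_{k₁} a_{k-k₁} satisfies |N_k| ≤ √E · C · (2^{s-1/2} + 2^{s-1}/√(2s-1)) / |k|^{s-3/2} for all k ∈ ℤ \ {0}. -/

import Mathlib

/-- `⌊k⌋ = |k|` for `k ≠ 0` and `⌊0⌋ = 1`. -/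
noncomputable def nk (k : ℤ) : ℝ := if k = 0 then 1 else |(k : ℝ)|

theorem hh (x e : ℝ) (hx : 1 ≤ x) (he : 0 < e) :
    e * x ^ (-1 - e) ≤ (x - 1/2) ^ (-e) - (x + 1/2) ^ (-e) := by
  have h1 : 0 < x - 1/2 := by linarith
  have h2 : 0 < x + 1/2 := by linarith
  have hx0 : 0 < x := by linarith
  set h := 1 / (2 * x) with hh
  have hpos : 0 < h := by positivity
  have hlt : h ≤ 1/2 := by rw [hh, div_le_div_iff₀ (by positivity) (by norm_num)]; linarith
  have e1 : x - 1/2 = x * (1 - h) := by rw [hh]; field_simp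
  have e2 : x + 1/2 = x * (1 + h) := by rw [hh]; field_simp
  have e3 : x ^ (-1 - e) = x ^ (-e) * (2 * h) := by
    rw [show (-1 - e) = -e - 1 by ring, Real.rpow_sub_one hx0.ne', hh]; field_simp
  rw [e1, e2, e3, Real.mul_rpow hx0.le (by linarith), Real.mul_rpow hx0.le (by linarith),
    ← mul_sub]
  rw [show e * (x ^ (-e) * (2 * h)) = x ^ (-e) * (e * (2 * h)) by ring]
  apply mul_le_mul_of_nonneg_left _ (by positivity)
  have hL : 2 * h ≤ Real.log (1 + h) - Real.log (1 - h) := by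
    have := Real.hasSum_log_sub_log_of_abs_lt_one (x := h) (by rw [abs_of_pos hpos]; linarith)
    have h3 := le_hasSum this 0 (fun i _ => by positivity)
    simpa using h3
  have hP : Real.log (1 + h) + Real.log (1 - h) ≤ 0 := by
    rw [← Real.log_mul (by linarith) (by linarith)]
    apply Real.log_nonpos <;> nlinarith
  rw [Real.rpow_def_of_pos (by linarith), Real.rpow_def_of_pos (by linarith)]
  set p := Real.log (1 + h)
  set q := Real.log (1 - h)
  set w := e * (p - q) / 2
  have hw : e * h ≤ w := by
    have := mul_le_mul_of_nonneg_left hL he.le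
    simp only [w]; linarith
  have hw0 : 0 ≤ w := le_trans (by positivity) hw
  have hs : w ≤ Real.sinh w := Real.self_le_sinh_iff.2 hw0
  have hr : 1 ≤ Real.exp (-(e * (p + q) / 2)) := by
    apply Real.one_le_exp
    have := mul_nonpos_of_nonneg_of_nonpos he.le hP
    linarith
  have : Real.exp (q * -e) - Real.exp (p * -e)
      = Real.exp (-(e * (p + q) / 2)) * (2 * Real.sinh w) := by
    rw [Real.sinh_eq, show q * -e = -(e * (p + q) / 2) + w by simp only [w]; ring,
      show p * -e = -(e * (p + q) / 2) + -w by simp only [w]; ring, Real.exp_add, Real.exp_add]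
    ring
  rw [this]
  nlinarith

theorem tail (e : ℝ) (he : 0 < e) (m M : ℕ) :
    ∑ i ∈ Finset.range M, ((m : ℝ) + 1 + i) ^ (-1 - e) ≤ ((m : ℝ) + 1/2) ^ (-e) / e := by
  have : ∑ i ∈ Finset.range M, ((m : ℝ) + 1 + i) ^ (-1 - e) ≤
      (((m : ℝ) + 1/2) ^ (-e) - ((m : ℝ) + 1/2 + M) ^ (-e)) / e := by
    induction M with
    | zero => simp
    | succ M ih =>
      rw [Finset.sum_range_succ]
      have := hh ((m : ℝ) + 1 + M) e (by have : (0:ℝ) ≤ m := by positivity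
                                         have : (0:ℝ) ≤ M := by positivity
                                         linarith) he
      rw [le_div_iff₀ he] at ih ⊢
      rw [show (m : ℝ) + 1 + M - 1/2 = m + 1/2 + M by ring,
        show (m : ℝ) + 1 + M + 1/2 = m + 1/2 + (M + 1 : ℕ) by push_cast; ring] at this
      linarith
  refine this.trans ?_
  gcongr
  have : 0 ≤ ((m : ℝ) + 1/2 + M) ^ (-e) := by positivity
  linarith

theorem fin_cs (H F EN T : ℝ) (hH : 0 ≤ H) (hF : 0 ≤ F) (hEN : 0 ≤ EN) (hT : 0 ≤ T)
    (h : 4 * H + F ≤ T ^ 2) : 2 * (√H * √EN) + F ≤ √(EN + F) * T := by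
  refine (sq_le_sq₀ (by positivity) (by positivity)).1 ?_
  rw [mul_pow, Real.sq_sqrt (by positivity)]
  refine le_trans ?_ (mul_le_mul_of_nonneg_left h (by positivity))
  have h1 := Real.sq_sqrt hH
  have h2 := Real.sq_sqrt hEN
  have h3 := Real.sq_sqrt hF
  set x := √H
  set y := √EN
  set z := √F
  rw [← h1, ← h2, ← h3]
  nlinarith [sq_nonneg (2 * x * z - y * z)]


theorem farE (b : ℤ → ℝ) (C e : ℝ) (he : 0 < e)
    (hsum : Summable (fun j => b j ^ 2))
    (hbd : ∀ n : ℕ, 0 < n → b n ^ 2 ≤ C ^ 2 * (n : ℝ) ^ (-1 - e) ∧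
      b (-n) ^ 2 ≤ C ^ 2 * (n : ℝ) ^ (-1 - e)) (m : ℕ) :
    ∑' j, b j ^ 2 ≤ ∑ j ∈ Finset.Icc (-(m : ℤ)) m, b j ^ 2 +
      2 * C ^ 2 * (((m : ℝ) + 1/2) ^ (-e) / e) := by
  have key : ∀ M : ℕ, ∑ j ∈ Finset.Icc (-((m + M : ℕ) : ℤ)) ((m + M : ℕ) : ℤ), b j ^ 2 ≤
      ∑ j ∈ Finset.Icc (-(m : ℤ)) m, b j ^ 2 +
      2 * C ^ 2 * ∑ i ∈ Finset.range M, ((m : ℝ) + 1 + i) ^ (-1 - e) := by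
    intro M
    induction M with
    | zero => simp
    | succ M ih =>
      have : Finset.Icc (-((m + (M + 1) : ℕ) : ℤ)) ((m + (M + 1) : ℕ) : ℤ) =
          insert ((m + (M + 1) : ℕ) : ℤ) (insert (-((m + (M + 1) : ℕ) : ℤ))
            (Finset.Icc (-((m + M : ℕ) : ℤ)) ((m + M : ℕ) : ℤ))) := by
        ext x; simp only [Finset.mem_insert, Finset.mem_Icc]; omega
      rw [this, Finset.sum_insert, Finset.sum_insert, Finset.sum_range_succ]
      · obtain ⟨h1, h2⟩ := hbd (m + (M + 1)) (by omega)
        have h3 : ((m + (M + 1) : ℕ) : ℝ) = (m : ℝ) + 1 + M := by push_cast; ring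
        rw [h3] at h1 h2
        linarith
      · simp only [Finset.mem_Icc]; omega
      · simp only [Finset.mem_insert, Finset.mem_Icc]; omega
  refine Summable.tsum_le_of_sum_le hsum fun s => ?_
  obtain ⟨M, hM⟩ : ∃ M : ℕ, s ⊆ Finset.Icc (-((m + M : ℕ) : ℤ)) ((m + M : ℕ) : ℤ) := by
    refine ⟨s.sup Int.natAbs, fun x hx => ?_⟩
    have : x.natAbs ≤ s.sup Int.natAbs := Finset.le_sup (f := Int.natAbs) hx
    simp only [Finset.mem_Icc]; omega
  refine (Finset.sum_le_sum_of_subset_of_nonneg hM (fun _ _ _ => sq_nonneg _)).trans ?_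
  refine (key M).trans ?_
  have := tail e he m M
  gcongr

theorem nearH (b : ℤ → ℝ) (C e : ℝ) (he : 0 < e)
    (hbd : ∀ n : ℕ, 0 < n → b n ^ 2 ≤ C ^ 2 * (n : ℝ) ^ (-1 - e)) (k m : ℕ) (hk : 0 < k)
    (hm : m = k / 2) :
    ∑ j ∈ Finset.Icc ((k : ℤ) - m) (k + m), b j ^ 2 ≤
      C ^ 2 * (((k : ℝ) / 2) ^ (-e) * (1 + √2 / √e)) := by
  set G := ((k : ℝ) / 2) ^ (-e) with hG
  have hk' : (0 : ℝ) < k := by exact_mod_cast hk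
  have hG0 : 0 < G := by positivity
  have hmk : (k : ℝ) / 2 ≤ m + 1/2 := by
    have : k ≤ 2 * m + 1 := by omega
    have : (k : ℝ) ≤ 2 * m + 1 := by exact_mod_cast this
    linarith
  have hV : ∑ i ∈ Finset.range k, ((m : ℝ) + 1 + i) ^ (-1 - e) ≤ G / e := by
    refine (tail e he m k).trans ?_
    gcongr
    exact Real.rpow_le_rpow_of_nonpos (by positivity) hmk (by linarith)
  have h2G : ∑ i ∈ Finset.range k, ((m : ℝ) + 1 + i) ^ (-1 - e) ≤ 2 * G := by
    have : ∀ i ∈ Finset.range k, ((m : ℝ) + 1 + i) ^ (-1 - e) ≤ G * (2 / k) := by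
      intro i _
      have h1 : G * (2 / k) = ((k : ℝ) / 2) ^ (-1 - e) := by
        rw [show (-1 - e) = -e - 1 by ring, Real.rpow_sub_one (by positivity)]
        field_simp
        rw [hG]
      rw [h1]
      have : (0 : ℝ) ≤ i := by positivity
      exact Real.rpow_le_rpow_of_nonpos (by positivity) (by linarith) (by linarith)
    refine (Finset.sum_le_sum this).trans ?_
    simp only [Finset.sum_const, Finset.card_range, nsmul_eq_mul]
    apply le_of_eq; field_simp
  have hmin : ∑ i ∈ Finset.range k, ((m : ℝ) + 1 + i) ^ (-1 - e) ≤ G * (√2 / √e) := by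
    rw [← Real.sqrt_div (by norm_num)]
    by_cases h : 2 ≤ 1 / e
    · refine h2G.trans ?_
      have : 2 ≤ √(2 / e) := by
        apply Real.le_sqrt_of_sq_le
        have : 2 / e = 2 * (1 / e) := by ring
        linarith
      nlinarith
    · refine hV.trans ?_
      have h0 : 0 < 1 / e := by positivity
      have : 1 / e ≤ √(2 / e) := by
        apply Real.le_sqrt_of_sq_le
        have : 2 / e = 2 * (1 / e) := by ring
        nlinarith
      have h3 : G / e = G * (1 / e) := by ring
      rw [h3]
      gcongr
  have hD : ∑ j ∈ Finset.Icc ((m : ℤ) + 1) (k + m), b j ^ 2 ≤ C ^ 2 * (G * (√2 / √e)) := by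
    have h1 : ∑ j ∈ Finset.Icc ((m : ℤ) + 1) (k + m), b j ^ 2 =
        ∑ i ∈ Finset.range k, b ((m + 1 + i : ℕ) : ℤ) ^ 2 := by
      symm
      refine Finset.sum_nbij' (fun i => ((m + 1 + i : ℕ) : ℤ)) (fun j => (j - (m + 1)).toNat)
        ?_ ?_ ?_ ?_ ?_
      all_goals intro x hx
      all_goals simp only [Finset.mem_range, Finset.mem_Icc] at *
      all_goals omega
    rw [h1]
    calc _ ≤ ∑ i ∈ Finset.range k, C ^ 2 * ((m : ℝ) + 1 + i) ^ (-1 - e) := by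
          refine Finset.sum_le_sum fun i _ => ?_
          have := hbd (m + 1 + i) (by omega)
          rw [show ((m + 1 + i : ℕ) : ℝ) = (m : ℝ) + 1 + i by push_cast; ring] at this
          exact this
      _ ≤ _ := by
          rw [← Finset.mul_sum]; gcongr
  by_cases hpar : k = 2 * m
  · have : Finset.Icc ((k : ℤ) - m) (k + m) =
        insert (m : ℤ) (Finset.Icc ((m : ℤ) + 1) (k + m)) := by
      ext x; simp only [Finset.mem_insert, Finset.mem_Icc]; omega
    rw [this, Finset.sum_insert (by simp)]
    have hm1 : 0 < m := by omega
    have hz := hbd m hm1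
    have hm1' : (1 : ℝ) ≤ m := by exact_mod_cast hm1
    have : (m : ℝ) ^ (-1 - e) ≤ G := by
      have : (k : ℝ) / 2 = m := by rw [hpar]; push_cast; ring
      rw [hG, this]
      exact Real.rpow_le_rpow_of_exponent_le hm1' (by linarith)
    have : C ^ 2 * (m : ℝ) ^ (-1 - e) ≤ C ^ 2 * G := by gcongr
    linarith
  · have : Finset.Icc ((k : ℤ) - m) (k + m) = Finset.Icc ((m : ℤ) + 1) (k + m) := by
      ext x; simp only [Finset.mem_Icc]; omega
    rw [this]
    have : 0 ≤ C ^ 2 * G := by positivity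
    linarith

theorem core (b : ℤ → ℝ) (C e : ℝ) (hC : 0 < C) (he : 0 < e) (hb0 : ∀ j, 0 ≤ b j)
    (hsum : Summable (fun j => b j ^ 2))
    (hbd : ∀ n : ℕ, 0 < n → b n ^ 2 ≤ C ^ 2 * (n : ℝ) ^ (-1 - e) ∧
      b (-n) ^ 2 ≤ C ^ 2 * (n : ℝ) ^ (-1 - e)) (k : ℕ) (hk : 0 < k) :
    Summable (fun j : ℤ => b j * b (k - j)) ∧
    ∑' j : ℤ, b j * b (k - j) ≤
      √(∑' j, b j ^ 2) * (C * √(((k : ℝ) / 2) ^ (-e)) * (2 + √2 / √e)) := by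
  set m := k / 2 with hm
  have hk' : (0 : ℝ) < k := by exact_mod_cast hk
  have hsum' : Summable (fun j : ℤ => b (k - j) ^ 2) :=
    (Equiv.subLeft (k : ℤ)).summable_iff (f := fun j => b j ^ 2) |>.2 hsum
  have htsum' : ∑' j : ℤ, b (k - j) ^ 2 = ∑' j, b j ^ 2 :=
    (Equiv.subLeft (k : ℤ)).tsum_eq (fun j => b j ^ 2)
  have hav : Summable (fun j : ℤ => (b j ^ 2 + b (k - j) ^ 2) / 2) := (hsum.add hsum').div_const 2
  have hle : ∀ j : ℤ, b j * b (k - j) ≤ (b j ^ 2 + b (k - j) ^ 2) / 2 := fun j => by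
    nlinarith [sq_nonneg (b j - b (k - j))]
  have hp : Summable (fun j : ℤ => b j * b (k - j)) :=
    Summable.of_nonneg_of_le (fun j => mul_nonneg (hb0 _) (hb0 _)) hle hav
  refine ⟨hp, ?_⟩
  set G := ((k : ℝ) / 2) ^ (-e) with hG
  have hG0 : 0 < G := by positivity
  set E := ∑' j, b j ^ 2 with hE
  set N : Finset ℤ := Finset.Icc (-(m : ℤ)) (k + m) with hN
  set EN := ∑ j ∈ N, b j ^ 2 with hEN
  have hrefl : ∑ j ∈ N, b (k - j) ^ 2 = EN := by
    refine Finset.sum_nbij' (fun j => k - j) (fun j => k - j) ?_ ?_ ?_ ?_ ?_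
    all_goals intro x hx
    all_goals simp only [hN, Finset.mem_Icc] at *
    all_goals omega
  have hfar : ∑' j, b j * b (k - j) ≤ ∑ j ∈ N, b j * b (k - j) + (E - EN) := by
    rw [← hp.sum_add_tsum_compl (s := N)]
    gcongr
    have h1 : ∑ j ∈ N, (b j ^ 2 + b (k - j) ^ 2) / 2 = EN := by
      rw [← Finset.sum_div, Finset.sum_add_distrib, hrefl]; ring
    have h2 : ∑' j : ℤ, (b j ^ 2 + b (k - j) ^ 2) / 2 = E := by
      rw [tsum_div_const, hsum.tsum_add hsum', htsum']; ring
    have h3 := hav.sum_add_tsum_compl (s := N)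
    rw [h1, h2] at h3
    rw [← h3, add_sub_cancel_left]
    exact Summable.tsum_le_tsum (fun j => hle j) (hp.subtype _) (hav.subtype _)
  set Em := ∑ j ∈ Finset.Icc (-(m : ℤ)) m, b j ^ 2 with hEm
  have hEmN : Em ≤ EN := Finset.sum_le_sum_of_subset_of_nonneg
    (by intro x; simp only [hN, Finset.mem_Icc]; omega) (fun _ _ _ => sq_nonneg _)
  have hENE : EN ≤ E := hsum.sum_le_tsum N (fun _ _ => sq_nonneg _)
  have hEm0 : 0 ≤ Em := Finset.sum_nonneg (fun _ _ => sq_nonneg _)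
  have hmk : (k : ℝ) / 2 ≤ m + 1/2 := by
    have : k ≤ 2 * m + 1 := by omega
    have : (k : ℝ) ≤ 2 * m + 1 := by exact_mod_cast this
    linarith
  have hEF : E - EN ≤ C ^ 2 * G * (2 / e) := by
    have h1 := farE b C e he hsum hbd m
    have h2 : ((m : ℝ) + 1/2) ^ (-e) ≤ G :=
      Real.rpow_le_rpow_of_nonpos (by positivity) hmk (by linarith)
    have h3 : 2 * C ^ 2 * (((m : ℝ) + 1/2) ^ (-e) / e) ≤ 2 * C ^ 2 * (G / e) := by gcongr
    have h4 : 2 * C ^ 2 * (G / e) = C ^ 2 * G * (2 / e) := by ring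
    linarith
  set H := ∑ j ∈ Finset.Icc ((k : ℤ) - m) (k + m), b j ^ 2 with hH
  have hHle : H ≤ C ^ 2 * (G * (1 + √2 / √e)) :=
    nearH b C e he (fun n hn => (hbd n hn).1) k m hk hm
  have hH0 : 0 ≤ H := Finset.sum_nonneg (fun _ _ => sq_nonneg _)
  have hnear : ∑ j ∈ N, b j * b (k - j) ≤ 2 * (√H * √Em) := by
    have hu : N ⊆ Finset.Icc ((k : ℤ) - m) (k + m) ∪ Finset.Icc (-(m : ℤ)) m := by
      intro x; simp only [hN, Finset.mem_union, Finset.mem_Icc]; omega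
    have h1 : ∑ j ∈ Finset.Icc (-(m : ℤ)) m, b j * b (k - j) =
        ∑ j ∈ Finset.Icc ((k : ℤ) - m) (k + m), b j * b (k - j) := by
      refine Finset.sum_nbij' (fun j => k - j) (fun j => k - j) ?_ ?_ ?_ ?_ ?_
      all_goals intro x hx
      all_goals simp only [Finset.mem_Icc] at *
      any_goals omega
      rw [sub_sub_cancel, mul_comm]
    have h2 : ∑ j ∈ Finset.Icc ((k : ℤ) - m) (k + m), b (k - j) ^ 2 = Em := by
      refine Finset.sum_nbij' (fun j => k - j) (fun j => k - j) ?_ ?_ ?_ ?_ ?_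
      all_goals intro x hx
      all_goals simp only [Finset.mem_Icc] at *
      all_goals omega
    have h3 := Real.sum_mul_le_sqrt_mul_sqrt (Finset.Icc ((k : ℤ) - m) (k + m)) b
      (fun j => b (k - j))
    rw [h2] at h3
    have h4 := Finset.sum_le_sum_of_subset_of_nonneg (f := fun j : ℤ => b j * b (k - j)) hu
      (fun _ _ _ => mul_nonneg (hb0 _) (hb0 _))
    have h5 := Finset.sum_union_inter (f := fun j : ℤ => b j * b (k - j))
      (s₁ := Finset.Icc ((k : ℤ) - m) (k + m)) (s₂ := Finset.Icc (-(m : ℤ)) m)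
    have h6 : 0 ≤ ∑ j ∈ Finset.Icc ((k : ℤ) - m) (k + m) ∩ Finset.Icc (-(m : ℤ)) m,
      b j * b (k - j) := Finset.sum_nonneg (fun _ _ => mul_nonneg (hb0 _) (hb0 _))
    linarith
  have hfin : ∑' j, b j * b (k - j) ≤ 2 * (√H * √EN) + (E - EN) := by
    have : √H * √Em ≤ √H * √EN := by gcongr
    linarith
  refine hfin.trans ?_
  -- final Cauchy-Schwarz
  set r := √2 / √e with hr
  have hr2 : r ^ 2 = 2 / e := by
    rw [hr, div_pow, Real.sq_sqrt (by norm_num), Real.sq_sqrt he.le]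
  have hr0 : 0 ≤ r := by positivity
  set F := E - EN with hF
  have hF0 : 0 ≤ F := by linarith
  have hEN0 : 0 ≤ EN := hEm0.trans hEmN
  set T := C * √G * (2 + r) with hT
  have hT0 : 0 ≤ T := by positivity
  have hT2 : T ^ 2 = C ^ 2 * G * (4 + 4 * r + r ^ 2) := by
    rw [hT, mul_pow, mul_pow, Real.sq_sqrt hG0.le]; ring
  have hPQ : 4 * H + F ≤ T ^ 2 := by
    rw [hT2]; rw [← hr2] at hEF; linarith
  rw [show E = EN + F by rw [hF]; ring]
  exact fin_cs H F EN T hH0 hF0 hEN0 hT0 hPQ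

theorem posk (a : ℤ → ℂ) (C s : ℝ) (hC : 0 < C) (hs : 1 / 2 < s)
    (hsum : Summable (fun k : ℤ => ‖a k‖ ^ 2))
    (hbd : ∀ k : ℤ, ‖a k‖ ≤ C / nk k ^ s) (k : ℕ) (hk : 0 < k) :
      ‖-Complex.I * (((k : ℤ) : ℂ) / 2) * ∑' k₁ : ℤ, a k₁ * a (k - k₁)‖ ≤
        Real.sqrt (∑' k : ℤ, ‖a k‖ ^ 2) * C *
            (2 ^ (s - 1 / 2) + 2 ^ (s - 1) / Real.sqrt (2 * s - 1)) /
          (k : ℝ) ^ (s - 3 / 2) := by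
  have hk' : (0 : ℝ) < k := by exact_mod_cast hk
  have he : 0 < 2 * s - 1 := by linarith
  have hb : ∀ (j : ℤ) (n : ℕ), 0 < n → |(j : ℝ)| = n →
      ‖a j‖ ^ 2 ≤ C ^ 2 * (n : ℝ) ^ (-1 - (2 * s - 1)) := by
    intro j n hn hj
    have hn' : (0 : ℝ) < n := by exact_mod_cast hn
    have hj0 : j ≠ 0 := by rintro rfl; rw [Int.cast_zero, abs_zero] at hj; linarith
    have h := hbd j
    rw [nk, if_neg hj0, hj] at h
    calc ‖a j‖ ^ 2 ≤ (C / (n : ℝ) ^ s) ^ 2 := by gcongr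
      _ = _ := by
        rw [div_pow, ← Real.rpow_mul_natCast hn'.le, div_eq_mul_inv, ← Real.rpow_neg hn'.le]
        congr 2; push_cast; ring
  obtain ⟨hp, hS⟩ := core (fun j => ‖a j‖) C (2 * s - 1) hC he (fun _ => norm_nonneg _) hsum
    (fun n hn => ⟨hb n n hn (by simp), hb (-n) n hn (by simp)⟩) k hk
  have hn : ‖∑' k₁ : ℤ, a k₁ * a (k - k₁)‖ ≤ ∑' j : ℤ, ‖a j‖ * ‖a (k - j)‖ := by
    have := norm_tsum_le_tsum_norm (f := fun k₁ : ℤ => a k₁ * a (k - k₁))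
      (by simpa only [norm_mul] using hp)
    simpa only [norm_mul] using this
  have h1 : ‖-Complex.I * (((k : ℤ) : ℂ) / 2)‖ = k / 2 := by simp
  rw [norm_mul, h1]
  refine (mul_le_mul_of_nonneg_left (hn.trans hS) (by positivity)).trans (le_of_eq ?_)
  have hq : √(((k : ℝ) / 2) ^ (-(2 * s - 1))) = (k : ℝ) ^ (1 / 2 - s) * 2 ^ (s - 1 / 2) := by
    rw [Real.sqrt_eq_rpow, ← Real.rpow_mul (by positivity), Real.div_rpow hk'.le (by norm_num),
      div_eq_mul_inv, ← Real.rpow_neg (by norm_num)]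
    congr 2 <;> ring
  have hk3 : ((k : ℝ) ^ (s - 3 / 2))⁻¹ = k * (k : ℝ) ^ (1 / 2 - s) := by
    rw [← Real.rpow_neg hk'.le, show -(s - 3 / 2) = 1 + (1 / 2 - s) by ring, Real.rpow_add hk', Real.rpow_one]
  have h2 : (2 : ℝ) ^ (s - 1) = 2 ^ (s - 1 / 2) * √2 / 2 := by
    rw [Real.sqrt_eq_rpow, ← Real.rpow_add (by norm_num), ← Real.rpow_sub_one (by norm_num)]
    congr 1; ring
  rw [hq, div_eq_mul_inv _ ((k : ℝ) ^ (s - 3 / 2)), hk3, h2]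
  ring

theorem stmt_2 (a : ℤ → ℂ) (C s : ℝ) (hC : 0 < C) (hs : 1 / 2 < s)
    (hsum : Summable (fun k : ℤ => ‖a k‖ ^ 2))
    (hbd : ∀ k : ℤ, ‖a k‖ ≤ C / nk k ^ s) :
    ∀ k : ℤ, k ≠ 0 →
      ‖-Complex.I * ((k : ℂ) / 2) * ∑' k₁ : ℤ, a k₁ * a (k - k₁)‖ ≤
        Real.sqrt (∑' k : ℤ, ‖a k‖ ^ 2) * C *
            (2 ^ (s - 1 / 2) + 2 ^ (s - 1) / Real.sqrt (2 * s - 1)) /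
          |(k : ℝ)| ^ (s - 3 / 2) := by
  intro k hk
  obtain ⟨n, rfl | rfl⟩ := Int.eq_nat_or_neg k
  · have := posk a C s hC hs hsum hbd n (by omega)
    simpa using this
  · have h1 : Summable (fun k : ℤ => ‖a (-k)‖ ^ 2) :=
      (Equiv.neg ℤ).summable_iff (f := fun j => ‖a j‖ ^ 2) |>.2 hsum
    have h2 : ∑' k : ℤ, ‖a (-k)‖ ^ 2 = ∑' k : ℤ, ‖a k‖ ^ 2 :=
      (Equiv.neg ℤ).tsum_eq (fun j => ‖a j‖ ^ 2)
    have := posk (fun j => a (-j)) C s hC hs h1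
      (fun j => by have := hbd (-j); simpa [nk] using this) n (by omega)
    rw [h2] at this
    have h3 : ∑' j : ℤ, a (-j) * a (-((n : ℤ) - j)) = ∑' j : ℤ, a j * a (-(n : ℤ) - j) := by
      rw [← (Equiv.neg ℤ).tsum_eq (fun j : ℤ => a j * a (-(n : ℤ) - j))]
      refine tsum_congr fun j => ?_
      simp only [Equiv.neg_apply]
      congr 2; ring
    rw [h3] at this
    simpa using this
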